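/- If σ = (𝒫, Z) and τ = (𝒬, W) are stability conditions on a triangulated category with the same stability function Z = W and d(𝒫, 𝒬) < 1, then σ = τ (i.e., 𝒫 = 𝒬). -/

import Mathlib

/-!
Let `E` be `σ`-semistable of phase `φ`. As `d < 1`, its `τ`-phases lie in `(φ - 1, φ + 1)`.
If none exceeds `φ`, then `Z(E)`, which lies on the ray of phase `φ`, is a sum of vectors in a
half-plane bounded by the line through that ray, so all `τ`-phases are `φ` and `E` is
`τ`-semistable (`Filt.height_nonpos`, `Filt.mem_of_forall_eq`).

Otherwise let `A → E` be the part of the `τ`-filtration with phases in `(φ, φ + 1)`. Then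
`exp(-iπφ) Z(A)` has positive imaginary part (`Filt.height_pos`), whereas the `σ`-phases of `A`
exceed `φ - 1`; so some `σ`-phase of `A` is larger than `φ`, and there is a nonzero morphism
`D → A` from a `σ`-semistable object of phase `> φ` (`Filt.exists_top`). Its composite with
`A → E` vanishes. But the `τ`-phases of `D` exceed `φ - 1`, so `D⟦1⟧` has no morphisms to the
`τ`-factors of `E` of phase `≤ φ`, and `Hom(D, A) → Hom(D, E)` is injective
(`Filt.exists_trunc`): a contradiction. Exchanging `σ` and `τ` gives the other inclusion.

The argument works with filtrations only through long exact sequences of `Hom`, hence needs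
neither the octahedral axiom nor truncation functors.
-/

open CategoryTheory CategoryTheory.Limits CategoryTheory.Pretriangulated

universe v u

variable (C : Type u) [Category.{v} C] [Preadditive C] [HasZeroObject C] [HasShift C ℤ]
  [∀ n : ℤ, (shiftFunctor C n).Additive] [Pretriangulated C]

variable {C} in
/-- `E` admits a Harder–Narasimhan filtration
`0 = E₀ → E₁ → ... → Eₙ ≅ E` by distinguished triangles `E_{i-1} → E_i → A_i → E_{i-1}[1]`
with nonzero factors `A_i ∈ 𝒫(φ_i)` and `φ₁ > ... > φₙ`, all phases satisfying the
predicate `pred`. (For `E ≅ 0` one takes `n = 0`.) -/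
def HasHNWith (P : ℝ → C → Prop) (pred : ℝ → Prop) (E : C) : Prop :=
  ∃ (n : ℕ) (obj : Fin (n + 1) → C) (f : ∀ i : Fin n, obj i.castSucc ⟶ obj i.succ)
    (A : Fin n → C) (π : ∀ i : Fin n, obj i.succ ⟶ A i)
    (δ : ∀ i : Fin n, A i ⟶ (obj i.castSucc)⟦(1 : ℤ)⟧) (φ : Fin n → ℝ),
    IsZero (obj 0) ∧ Nonempty (obj (Fin.last n) ≅ E) ∧ StrictAnti φ ∧
    (∀ i, ¬ IsZero (A i)) ∧ (∀ i, P (φ i) (A i)) ∧ (∀ i, pred (φ i)) ∧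
    (∀ i, Triangle.mk (f i) (π i) (δ i) ∈ distTriang C)

/-- A slicing of a triangulated category: full additive subcategories `𝒫(φ)`, `φ ∈ ℝ`,
with `Hom(𝒫(φ₁), 𝒫(φ₂)) = 0` for `φ₁ > φ₂`, `𝒫(φ)[1] = 𝒫(φ+1)` and
Harder–Narasimhan filtrations for all objects. -/
structure TriSlicing where
  P : ℝ → C → Prop
  iso_closed : ∀ (φ : ℝ) {E F : C}, (E ≅ F) → P φ E → P φ F
  zero_mem : ∀ (φ : ℝ) (E : C), IsZero E → P φ E
  hom_zero : ∀ {φ₁ φ₂ : ℝ}, φ₂ < φ₁ → ∀ {E F : C} (f : E ⟶ F), P φ₁ E → P φ₂ F → f = 0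
  shift : ∀ (φ : ℝ) (E : C), P φ E ↔ P (φ + 1) (E⟦(1 : ℤ)⟧)
  HN : ∀ E : C, HasHNWith P (fun _ => True) E

variable {C}

/-- The maximal HN phase `φ⁺(E)` of a nonzero object, defined as the infimum of all `a`
such that all HN factors of `E` have phase `≤ a`. -/
noncomputable def TriSlicing.phiPlus (σ : TriSlicing C) (E : C) : ℝ :=
  sInf {a : ℝ | HasHNWith σ.P (fun ψ => ψ ≤ a) E}

/-- The minimal HN phase `φ⁻(E)` of a nonzero object, defined as the supremum of all `a`
such that all HN factors of `E` have phase `≥ a`. -/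
noncomputable def TriSlicing.phiMinus (σ : TriSlicing C) (E : C) : ℝ :=
  sSup {a : ℝ | HasHNWith σ.P (fun ψ => a ≤ ψ) E}

/-- The generalized distance between two slicings:
`d(𝒫,𝒬) = sup_{E ≠ 0} max(|φ⁺_𝒫(E) − φ⁺_𝒬(E)|, |φ⁻_𝒫(E) − φ⁻_𝒬(E)|) ∈ [0,∞]`. -/
noncomputable def slicingDist (σ τ : TriSlicing C) : ENNReal :=
  ⨆ E : {E : C // ¬ IsZero E},
    ENNReal.ofReal (max |σ.phiPlus E.1 - τ.phiPlus E.1| |σ.phiMinus E.1 - τ.phiMinus E.1|)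

/-!
STATEMENT 15: If `σ = (𝒫, Z)` and `τ = (𝒬, W)` are stability conditions on a
triangulated category with `Z = W` and `d(𝒫,𝒬) < 1`, then `σ = τ`.
-/

variable (C) in
/-- A stability condition on a triangulated category: a slicing `𝒫` together with an
additive `Z : K(𝒟) → ℂ` such that `Z(E) ∈ exp(iπφ)·ℝ_{>0}` for `0 ≠ E ∈ 𝒫(φ)`. -/
structure TriStability where
  slicing : TriSlicing C
  Z : C → ℂ
  additive : ∀ T : Triangle C, T ∈ (distTriang C) → Z T.obj₂ = Z T.obj₁ + Z T.obj₃
  compat : ∀ (φ : ℝ) (E : C), slicing.P φ E → ¬ IsZero E →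
    ∃ r : ℝ, 0 < r ∧ Z E = (r : ℂ) * Complex.exp (Real.pi * φ * Complex.I)

/-! ### Filtrations by induction -/

/-- `Filt P l E` means that `E` has a filtration whose semistable factors have the phases listed
in `l`, the last factor (of smallest phase) first.  It is the inductive form of `HasHNWith`:
a filtration of `E` is a filtration of the last proper step `X` together with a distinguished
triangle `X → E → A → X⟦1⟧`. -/
inductive Filt (P : ℝ → C → Prop) : List ℝ → C → Prop
  | nil (E : C) (hE : IsZero E) : Filt P [] E
  | cons (ψ : ℝ) (l : List ℝ) (X E A : C) (f : X ⟶ E) (g : E ⟶ A) (h : A ⟶ X⟦(1 : ℤ)⟧)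
      (hT : Triangle.mk f g h ∈ distTriang C) (hX : Filt P l X) (hA : P ψ A)
      (hA0 : ¬ IsZero A) (hlt : ∀ χ ∈ l, ψ < χ) : Filt P (ψ :: l) E

lemma Filt.of_iso {P : ℝ → C → Prop} {l : List ℝ} {E F : C} (e : E ≅ F) (h : Filt P l E) :
    Filt P l F := by
  cases h with
  | nil E hE => exact .nil _ (hE.of_iso e.symm)
  | cons ψ l X E A f g h hT hX hA hA0 hlt =>
    refine .cons ψ l X F A (f ≫ e.hom) (e.inv ≫ g) h ?_ hX hA hA0 hlt
    refine isomorphic_distinguished _ hT _ ?_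
    refine Triangle.isoMk _ _ (Iso.refl _) e.symm (Iso.refl _) ?_ ?_ ?_
    · change (f ≫ e.hom) ≫ e.inv = 𝟙 X ≫ f
      simp
    · change (e.inv ≫ g) ≫ 𝟙 A = e.inv ≫ g
      simp
    · change h ≫ (𝟙 X)⟦(1 : ℤ)⟧' = 𝟙 A ≫ h
      simp

/-- The inductive form of a Harder–Narasimhan filtration.  The last conjunct says that the
list `l` accounts for all the phases, so any bound on `l` is again a bound in the sense of
`HasHNWith`. -/
lemma exists_filt {P : ℝ → C → Prop} {pred : ℝ → Prop} {E : C} (hE : HasHNWith P pred E) :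
    ∃ l, Filt P l E ∧ (∀ ψ ∈ l, pred ψ) ∧ HasHNWith P (fun ψ => ψ ∈ l) E := by
  obtain ⟨n, obj, f, A, π, δ, φ, h0, ⟨e⟩, hφ, hA0, hA, hp, hT⟩ := hE
  have key : ∀ k : Fin (n + 1), ∃ l, Filt P l (obj k) ∧
      ∀ χ, χ ∈ l ↔ ∃ i : Fin n, i.castSucc < k ∧ φ i = χ := by
    intro k
    induction k using Fin.induction with
    | zero => exact ⟨[], .nil _ h0, by simp⟩
    | succ i ih =>
      obtain ⟨l, hl, hm⟩ := ih
      refine ⟨φ i :: l, .cons _ _ _ _ _ _ _ _ (hT i) hl (hA i) (hA0 i) ?_, ?_⟩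
      · intro χ hχ
        obtain ⟨j, hj, rfl⟩ := (hm χ).1 hχ
        exact hφ (by simpa using hj)
      · intro χ
        rw [List.mem_cons, hm]
        constructor
        · rintro (rfl | ⟨j, hj, rfl⟩)
          · exact ⟨i, Fin.castSucc_lt_succ, rfl⟩
          · exact ⟨j, hj.trans Fin.castSucc_lt_succ, rfl⟩
        · rintro ⟨j, hj, rfl⟩
          rcases (Fin.castSucc_lt_succ_iff.1 hj).lt_or_eq with h | rfl
          · exact .inr ⟨j, by simpa using h, rfl⟩
          · exact .inl rfl
  obtain ⟨l, hl, hm⟩ := key (Fin.last n)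
  refine ⟨l, hl.of_iso e, ?_, n, obj, f, A, π, δ, φ, h0, ⟨e⟩, hφ, hA0, hA, ?_, hT⟩
  · intro ψ hψ
    obtain ⟨i, -, rfl⟩ := (hm ψ).1 hψ
    exact hp i
  · intro i
    exact (hm _).2 ⟨i, Fin.castSucc_lt_last i, rfl⟩

lemma HasHNWith.mono {P : ℝ → C → Prop} {p q : ℝ → Prop} {E : C} (h : HasHNWith P p E)
    (hpq : ∀ ψ, p ψ → q ψ) : HasHNWith P q E := by
  obtain ⟨n, obj, f, A, π, δ, φ, h0, he, hφ, hA0, hA, hp, hT⟩ := h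
  exact ⟨n, obj, f, A, π, δ, φ, h0, he, hφ, hA0, hA, fun i => hpq _ (hp i), hT⟩

lemma filt_single {P : ℝ → C → Prop} {φ : ℝ} {E : C} (hE : P φ E) (h0 : ¬ IsZero E) :
    Filt P [φ] E :=
  .cons φ [] _ E E 0 (𝟙 E) 0 (contractible_distinguished₁ E) (.nil _ (isZero_zero C)) hE h0
    (by simp)

lemma Filt.ne_nil {P : ℝ → C → Prop} {l : List ℝ} {E : C} (h : Filt P l E) (h0 : ¬ IsZero E) :
    l ≠ [] := by
  rintro rfl
  cases h with
  | nil E hE => exact h0 hE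

/-! ### Vanishing of morphisms -/

section Exact

variable {X E A Y : C} {f : X ⟶ E} {p : E ⟶ A} {d : A ⟶ X⟦(1 : ℤ)⟧}

lemma exists_lift_to_fst (hT : Triangle.mk f p d ∈ distTriang C) (g : Y ⟶ E) (hg : g ≫ p = 0) :
    ∃ k : Y ⟶ X, g = k ≫ f :=
  Triangle.coyoneda_exact₂ _ hT g hg

lemma exists_lift_to_snd (hT : Triangle.mk f p d ∈ distTriang C) (g : Y ⟶ A) (hg : g ≫ d = 0) :
    ∃ k : Y ⟶ E, g = k ≫ p :=
  Triangle.coyoneda_exact₃ _ hT g hg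

lemma exists_lift_to_thd (hT : Triangle.mk f p d ∈ distTriang C) (g : Y ⟶ X⟦(1 : ℤ)⟧)
    (hg : g ≫ f⟦(1 : ℤ)⟧' = 0) : ∃ k : Y ⟶ A, g = k ≫ d :=
  Triangle.coyoneda_exact₁ _ hT g hg

lemma exists_desc_from_thd (hT : Triangle.mk f p d ∈ distTriang C) (g : E ⟶ Y)
    (hg : f ≫ g = 0) : ∃ k : A ⟶ Y, g = p ≫ k :=
  Triangle.yoneda_exact₂ _ hT g hg

lemma exists_desc_from_shift (hT : Triangle.mk f p d ∈ distTriang C) (g : A ⟶ Y)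
    (hg : p ≫ g = 0) : ∃ k : X⟦(1 : ℤ)⟧ ⟶ Y, g = d ≫ k :=
  Triangle.yoneda_exact₃ _ hT g hg

end Exact

lemma Filt.hom_to_eq_zero {P : ℝ → C → Prop} {l : List ℝ} {E : C} (h : Filt P l E) {X : C}
    (hX : ∀ ψ ∈ l, ∀ A, P ψ A → ∀ g : X ⟶ A, g = 0) : ∀ g : X ⟶ E, g = 0 := by
  induction h with
  | nil E hE => exact fun g => hE.eq_of_tgt _ _
  | cons ψ l Y E A f p d hT hY hA hA0 hlt ih =>
    intro g
    obtain ⟨k, hk⟩ := exists_lift_to_fst hT g (hX ψ (by simp) A hA _)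
    rw [hk, ih (fun χ hχ => hX χ (by simp [hχ])) k, zero_comp]

lemma Filt.hom_from_eq_zero {P : ℝ → C → Prop} {l : List ℝ} {E : C} (h : Filt P l E) {X : C}
    (hX : ∀ ψ ∈ l, ∀ A, P ψ A → ∀ g : A ⟶ X, g = 0) : ∀ g : E ⟶ X, g = 0 := by
  induction h with
  | nil E hE => exact fun g => hE.eq_of_src _ _
  | cons ψ l Y E A f p d hT hY hA hA0 hlt ih =>
    intro g
    obtain ⟨k, hk⟩ := exists_desc_from_thd hT g
      (ih (fun χ hχ => hX χ (by simp [hχ])) _)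
    rw [hk, hX ψ (by simp) A hA k, comp_zero]

lemma isZero_of_isZero_shift {E : C} (n : ℤ) (h : IsZero (E⟦n⟧)) : IsZero E := by
  rw [IsZero.iff_id_eq_zero] at h ⊢
  apply (shiftFunctor C n).map_injective
  rw [CategoryTheory.Functor.map_id, Functor.map_zero, h]

lemma Filt.shift_one {σ : TriSlicing C} {l : List ℝ} {E : C} (h : Filt σ.P l E) :
    Filt σ.P (l.map (· + 1)) (E⟦(1 : ℤ)⟧) := by
  induction h with
  | nil E hE => exact .nil _ ((shiftFunctor C (1 : ℤ)).map_isZero hE)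
  | cons ψ l Y E A f p d hT hY hA hA0 hlt ih =>
    refine .cons _ _ _ _ _ _ _ _ (Triangle.shift_distinguished _ hT 1) ih ((σ.shift _ _).1 hA)
      (fun h => hA0 (isZero_of_isZero_shift 1 h)) ?_
    intro χ hχ
    obtain ⟨χ', h', rfl⟩ := List.mem_map.1 hχ
    have := hlt _ h'
    linarith

/-- If `X → E → A → X⟦1⟧` is distinguished and `Hom(Y⟦1⟧, A) = 0`, then `Hom(Y, X) → Hom(Y, E)`
is injective. -/
lemma comp_eq_zero_imp {X E A Y : C} {f : X ⟶ E} {p : E ⟶ A} {d : A ⟶ X⟦(1 : ℤ)⟧}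
    (hT : Triangle.mk f p d ∈ distTriang C) (hY : ∀ g : Y⟦(1 : ℤ)⟧ ⟶ A, g = 0)
    (j : Y ⟶ X) (hj : j ≫ f = 0) : j = 0 := by
  obtain ⟨k, hk⟩ := exists_lift_to_thd hT (j⟦(1 : ℤ)⟧') (by
    rw [← Functor.map_comp, hj, Functor.map_zero])
  apply (shiftFunctor C (1 : ℤ)).map_injective
  rw [Functor.map_zero, hk, hY k, zero_comp]

/-! ### Extreme phases -/

/-- The first factor of a Harder–Narasimhan filtration maps nontrivially to the object. -/
lemma Filt.exists_top {σ : TriSlicing C} {l : List ℝ} {E : C} (h : Filt σ.P l E)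
    (hl : l ≠ []) : ∃ ψ ∈ l, (∀ χ ∈ l, χ ≤ ψ) ∧
      ∃ (A : C) (j : A ⟶ E), σ.P ψ A ∧ ¬ IsZero A ∧ j ≠ 0 := by
  induction h with
  | nil E hE => exact absurd rfl hl
  | cons ψ l X E A f p d hT hX hA hA0 hlt ih =>
    by_cases hl' : l = []
    · subst hl'
      refine ⟨ψ, by simp, by simp, A, ?_⟩
      cases hX with
      | nil X hX =>
        obtain ⟨s, hs⟩ := exists_lift_to_snd hT (𝟙 A)
          (((shiftFunctor C (1 : ℤ)).map_isZero hX).eq_of_tgt _ _)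
        refine ⟨s, hA, hA0, fun h => hA0 ?_⟩
        rw [IsZero.iff_id_eq_zero]
        exact hs.trans (by rw [h, zero_comp])
    · obtain ⟨χ, hχ, hmax, B, j, hB, hB0, hj⟩ := ih hl'
      have hψ := hlt χ hχ
      refine ⟨χ, by simp [hχ], ?_, B, j ≫ f, hB, hB0, fun h => hj ?_⟩
      · intro χ' h'
        rcases List.mem_cons.1 h' with rfl | h'
        · exact hψ.le
        · exact hmax _ h'
      · exact comp_eq_zero_imp hT
          (fun g => σ.hom_zero (by linarith) g ((σ.shift _ _).1 hB) hA) j h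

/-- An object maps nontrivially to the last factor of its Harder–Narasimhan filtration: if the
map vanished, the identity of that factor would factor through an object of larger phases. -/
lemma Filt.not_hom_bot {σ : TriSlicing C} {ψ : ℝ} {l : List ℝ} {E : C}
    (h : Filt σ.P (ψ :: l) E) (hE : ∀ A, σ.P ψ A → ∀ g : E ⟶ A, g = 0) : False := by
  cases h with
  | cons _ _ X _ A f p d hT hX hA hA0 hlt =>
    obtain ⟨k, hk⟩ := exists_desc_from_shift hT (𝟙 A)
      (by rw [hE A hA p, zero_comp])
    have hk0 : k = 0 := by
      refine hX.shift_one.hom_from_eq_zero ?_ k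
      intro χ hχ B hB g
      obtain ⟨χ', h', rfl⟩ := List.mem_map.1 hχ
      have := hlt _ h'
      exact σ.hom_zero (by linarith) g hB hA
    apply hA0
    rw [IsZero.iff_id_eq_zero]
    exact hk.trans (by rw [hk0, comp_zero])

lemma Filt.head_le {P : ℝ → C → Prop} {ψ : ℝ} {l : List ℝ} {E : C}
    (h : Filt P (ψ :: l) E) : ∀ χ ∈ ψ :: l, ψ ≤ χ := by
  cases h with
  | cons _ _ X _ A f p d hT hX hA hA0 hlt =>
    intro χ hχ
    rcases List.mem_cons.1 hχ with rfl | h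
    · exact le_rfl
    · exact (hlt _ h).le

lemma Filt.le_of_le {σ : TriSlicing C} {l l' : List ℝ} {E : C} (h : Filt σ.P l E)
    (h' : Filt σ.P l' E) {m : ℝ} (hm : ∀ χ ∈ l', χ ≤ m) : ∀ χ ∈ l, χ ≤ m := by
  intro χ hχ
  obtain ⟨ψ, -, hmax, A, j, hA, -, hj⟩ := h.exists_top (List.ne_nil_of_mem hχ)
  refine (hmax χ hχ).trans ?_
  by_contra! hlt
  exact hj (h'.hom_to_eq_zero
    (fun χ' hχ' B hB g => σ.hom_zero ((hm _ hχ').trans_lt hlt) g hA hB) j)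

lemma Filt.ge_of_ge {σ : TriSlicing C} {l l' : List ℝ} {E : C} (h : Filt σ.P l E)
    (h' : Filt σ.P l' E) {m : ℝ} (hm : ∀ χ ∈ l', m ≤ χ) : ∀ χ ∈ l, m ≤ χ := by
  cases l with
  | nil => simp
  | cons ψ l =>
    intro χ hχ
    refine le_trans ?_ (h.head_le χ hχ)
    by_contra! hlt
    exact h.not_hom_bot fun A hA g => h'.hom_from_eq_zero
      (fun χ' hχ' B hB g => σ.hom_zero (hlt.trans_le (hm _ hχ')) g hB hA) g

lemma Filt.phiPlus_le {σ : TriSlicing C} {l : List ℝ} {E : C} (h : Filt σ.P l E)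
    (h0 : ¬ IsZero E) {m : ℝ} (hm : ∀ χ ∈ l, χ ≤ m) : σ.phiPlus E ≤ m := by
  obtain ⟨l', h', -, hN⟩ := exists_filt (σ.HN E)
  refine csInf_le ?_ (hN.mono (h'.le_of_le h hm))
  obtain ⟨χ, hχ⟩ := List.exists_mem_of_ne_nil _ (h.ne_nil h0)
  refine ⟨χ, fun a ha => ?_⟩
  obtain ⟨l₂, h₂, hb, -⟩ := exists_filt (show HasHNWith σ.P (fun ψ => ψ ≤ a) E from ha)
  exact h.le_of_le h₂ hb χ hχ

lemma Filt.le_phiPlus {σ : TriSlicing C} {l : List ℝ} {E : C} (h : Filt σ.P l E) :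
    ∀ χ ∈ l, χ ≤ σ.phiPlus E := by
  intro χ hχ
  refine le_csInf ?_ fun a ha => ?_
  · obtain ⟨ψ, -, hmax, -⟩ := h.exists_top (List.ne_nil_of_mem hχ)
    obtain ⟨l', h', -, hN⟩ := exists_filt (σ.HN E)
    exact ⟨ψ, hN.mono (h'.le_of_le h hmax)⟩
  · obtain ⟨l₂, h₂, hb, -⟩ := exists_filt (show HasHNWith σ.P (fun ψ => ψ ≤ a) E from ha)
    exact h.le_of_le h₂ hb χ hχ

lemma Filt.le_phiMinus {σ : TriSlicing C} {l : List ℝ} {E : C} (h : Filt σ.P l E)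
    (h0 : ¬ IsZero E) {m : ℝ} (hm : ∀ χ ∈ l, m ≤ χ) : m ≤ σ.phiMinus E := by
  obtain ⟨l', h', -, hN⟩ := exists_filt (σ.HN E)
  refine le_csSup ?_ (hN.mono (h'.ge_of_ge h hm))
  obtain ⟨χ, hχ⟩ := List.exists_mem_of_ne_nil _ (h.ne_nil h0)
  refine ⟨χ, fun a ha => ?_⟩
  obtain ⟨l₂, h₂, hb, -⟩ := exists_filt (show HasHNWith σ.P (fun ψ => a ≤ ψ) E from ha)
  exact h.ge_of_ge h₂ hb χ hχ

lemma Filt.phiMinus_le {σ : TriSlicing C} {l : List ℝ} {E : C} (h : Filt σ.P l E) :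
    ∀ χ ∈ l, σ.phiMinus E ≤ χ := by
  intro χ hχ
  refine csSup_le ?_ fun a ha => ?_
  · obtain ⟨ψ, l₀, rfl⟩ := List.exists_cons_of_ne_nil (List.ne_nil_of_mem hχ)
    obtain ⟨l', h', -, hN⟩ := exists_filt (σ.HN E)
    exact ⟨ψ, hN.mono (h'.ge_of_ge h h.head_le)⟩
  · obtain ⟨l₂, h₂, hb, -⟩ := exists_filt (show HasHNWith σ.P (fun ψ => a ≤ ψ) E from ha)
    exact h.ge_of_ge h₂ hb χ hχ

lemma abs_phi_sub_lt {σ τ : TriSlicing C} (hd : slicingDist σ τ < 1) {E : C}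
    (h0 : ¬ IsZero E) :
    |σ.phiPlus E - τ.phiPlus E| < 1 ∧ |σ.phiMinus E - τ.phiMinus E| < 1 := by
  have h := (le_iSup (fun E : {E : C // ¬ IsZero E} => ENNReal.ofReal
    (max |σ.phiPlus E.1 - τ.phiPlus E.1| |σ.phiMinus E.1 - τ.phiMinus E.1|)) ⟨E, h0⟩).trans_lt hd
  rw [ENNReal.ofReal_lt_one] at h
  exact max_lt_iff.1 h

lemma slicingDist_comm (σ τ : TriSlicing C) : slicingDist σ τ = slicingDist τ σ := by
  simp only [slicingDist, abs_sub_comm]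

/-- For `d < 1`, a `σ`-semistable object of phase `φ` has all its `τ`-phases in
`(φ - 1, φ + 1)`. -/
lemma Filt.mem_Ioo {σ τ : TriSlicing C} (hd : slicingDist σ τ < 1) {φ : ℝ} {l : List ℝ} {E : C}
    (hE : σ.P φ E) (h0 : ¬ IsZero E) (h : Filt τ.P l E) : ∀ χ ∈ l, φ - 1 < χ ∧ χ < φ + 1 := by
  intro χ hχ
  obtain ⟨h₁, h₂⟩ := abs_phi_sub_lt hd h0
  rw [abs_lt] at h₁ h₂
  have a₁ := h.le_phiPlus χ hχ
  have a₂ := h.phiMinus_le χ hχ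
  have a₃ := (filt_single hE h0).phiPlus_le h0 (m := φ) (by simp)
  have a₄ := (filt_single hE h0).le_phiMinus h0 (m := φ) (by simp)
  constructor <;> linarith

/-! ### Truncation of a filtration -/

/-- The part `A → E` of a Harder–Narasimhan filtration with phases `> φ`.  In place of a
filtration of its cone, whose construction would need the octahedral axiom, only the injectivity
of `Hom(Y, A) → Hom(Y, E)` is recorded, for every `Y` such that `Y⟦1⟧` has no morphisms to objects
of phases `≤ φ`. -/
lemma Filt.exists_trunc {P : ℝ → C → Prop} {l : List ℝ} {E : C} (h : Filt P l E) (φ : ℝ)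
    (hl : ∃ χ ∈ l, φ < χ) : ∃ (A : C) (i : A ⟶ E) (l' : List ℝ), Filt P l' A ∧ l' ≠ [] ∧
      (∀ χ ∈ l', φ < χ ∧ χ ∈ l) ∧
      ∀ Y : C, (∀ χ ≤ φ, ∀ B, P χ B → ∀ g : Y⟦(1 : ℤ)⟧ ⟶ B, g = 0) →
        ∀ j : Y ⟶ A, j ≫ i = 0 → j = 0 := by
  induction h with
  | nil E hE => simp at hl
  | cons ψ l X E A f p d hT hX hA hA0 hlt ih =>
    rcases lt_or_ge φ ψ with hφ | hφ
    · refine ⟨E, 𝟙 E, ψ :: l, .cons ψ l X E A f p d hT hX hA hA0 hlt, by simp, ?_, ?_⟩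
      · intro χ hχ
        refine ⟨?_, hχ⟩
        rcases List.mem_cons.1 hχ with rfl | h'
        · exact hφ
        · exact hφ.trans (hlt _ h')
      · intro Y _ j hj
        simpa using hj
    · obtain ⟨χ, hχ, hφχ⟩ := hl
      have hχl : χ ∈ l := by
        rcases List.mem_cons.1 hχ with rfl | h'
        · exact absurd hφχ hφ.not_gt
        · exact h'
      obtain ⟨B, i, l', hB, hne, hl', hinj⟩ := ih ⟨χ, hχl, hφχ⟩
      refine ⟨B, i ≫ f, l', hB, hne, fun χ hχ => ⟨(hl' χ hχ).1, by simp [(hl' χ hχ).2]⟩, ?_⟩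
      intro Y hY j hj
      refine hinj Y hY j (comp_eq_zero_imp hT (hY ψ hφ A hA) _ ?_)
      rw [Category.assoc, hj]

/-! ### The central charge -/

lemma TriStability.Z_isZero (σ : TriStability C) {E : C} (hE : IsZero E) : σ.Z E = 0 := by
  have hT : Triangle.mk (𝟙 E) (0 : E ⟶ E) (0 : E ⟶ E⟦(1 : ℤ)⟧) ∈ distTriang C := by
    refine isomorphic_distinguished _ (contractible_distinguished E) _ ?_
    exact Triangle.isoMk _ _ (Iso.refl _) (Iso.refl _) (hE.iso (isZero_zero C))
      rfl (hE.eq_of_src _ _) (hE.eq_of_src _ _)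
  have := σ.additive _ hT
  simpa using this

/-- The component of `Z(E)` orthogonal to the ray of phase `φ`, that is, the imaginary part of
`exp(-iπφ) Z(E)`. -/
noncomputable def TriStability.height (σ : TriStability C) (φ : ℝ) (E : C) : ℝ :=
  (σ.Z E * Complex.exp (-(Real.pi * φ * Complex.I))).im

lemma TriStability.height_of_mem (σ : TriStability C) (φ : ℝ) {ψ : ℝ} {A : C}
    (hA : σ.slicing.P ψ A) (hA0 : ¬ IsZero A) :
    ∃ r : ℝ, 0 < r ∧ σ.height φ A = r * Real.sin (Real.pi * (ψ - φ)) := by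
  obtain ⟨r, hr, hZ⟩ := σ.compat ψ A hA hA0
  refine ⟨r, hr, ?_⟩
  have : (Real.pi * ψ * Complex.I + -(Real.pi * φ * Complex.I) : ℂ)
      = ((Real.pi * (ψ - φ) : ℝ) : ℂ) * Complex.I := by
    push_cast
    ring
  rw [TriStability.height, hZ, mul_assoc, ← Complex.exp_add, this, Complex.im_ofReal_mul,
    Complex.exp_ofReal_mul_I_im]

lemma TriStability.height_add (σ : TriStability C) (φ : ℝ) {X E A : C} {f : X ⟶ E} {p : E ⟶ A}
    {d : A ⟶ X⟦(1 : ℤ)⟧} (hT : Triangle.mk f p d ∈ distTriang C) :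
    σ.height φ E = σ.height φ X + σ.height φ A := by
  have := σ.additive _ hT
  simp only [Triangle.mk_obj₁, Triangle.mk_obj₂, Triangle.mk_obj₃] at this
  simp only [TriStability.height, this, add_mul, Complex.add_im]

lemma TriStability.height_isZero (σ : TriStability C) (φ : ℝ) {E : C} (hE : IsZero E) :
    σ.height φ E = 0 := by
  simp [TriStability.height, σ.Z_isZero hE]

lemma Filt.height_pos {σ : TriStability C} {l : List ℝ} {E : C} (h : Filt σ.slicing.P l E)
    {φ : ℝ} (hl : ∀ χ ∈ l, φ < χ ∧ χ < φ + 1) (hne : l ≠ []) : 0 < σ.height φ E := by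
  have key : 0 ≤ σ.height φ E ∧ (l ≠ [] → 0 < σ.height φ E) := by
    clear hne
    induction h with
    | nil E hE => simp [σ.height_isZero φ hE]
    | cons ψ l X E A f p d hT hX hA hA0 hlt ih =>
      obtain ⟨hX0, -⟩ := ih (fun χ hχ => hl χ (by simp [hχ]))
      obtain ⟨r, hr, hh⟩ := σ.height_of_mem φ hA hA0
      obtain ⟨h₁, h₂⟩ := hl ψ (by simp)
      have hs : 0 < Real.sin (Real.pi * (ψ - φ)) :=
        Real.sin_pos_of_pos_of_lt_pi (mul_pos Real.pi_pos (by linarith))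
          (by nlinarith [Real.pi_pos])
      have := mul_pos hr hs
      rw [σ.height_add φ hT, hh]
      exact ⟨by linarith, fun _ => by linarith⟩
  exact key.2 hne

lemma Filt.height_nonpos {σ : TriStability C} {l : List ℝ} {E : C} (h : Filt σ.slicing.P l E)
    {φ : ℝ} (hl : ∀ χ ∈ l, φ - 1 < χ ∧ χ ≤ φ) :
    σ.height φ E ≤ 0 ∧ (σ.height φ E = 0 → ∀ χ ∈ l, χ = φ) := by
  induction h with
  | nil E hE => simp [σ.height_isZero φ hE]
  | cons ψ l X E A f p d hT hX hA hA0 hlt ih =>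
    obtain ⟨hX0, hXe⟩ := ih (fun χ hχ => hl χ (by simp [hχ]))
    obtain ⟨r, hr, hh⟩ := σ.height_of_mem φ hA hA0
    obtain ⟨h₁, h₂⟩ := hl ψ (by simp)
    rw [σ.height_add φ hT, hh]
    rcases h₂.eq_or_lt with rfl | h₂
    · simp only [sub_self, mul_zero, Real.sin_zero, add_zero]
      refine ⟨hX0, fun h0 χ hχ => ?_⟩
      rcases List.mem_cons.1 hχ with rfl | hχ
      · rfl
      · exact hXe h0 χ hχ
    · have hs : Real.sin (Real.pi * (ψ - φ)) < 0 :=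
        Real.sin_neg_of_neg_of_neg_pi_lt (by nlinarith [Real.pi_pos])
          (by nlinarith [Real.pi_pos])
      have := mul_neg_of_pos_of_neg hr hs
      exact ⟨by linarith, fun h0 => by linarith⟩

lemma Filt.mem_of_forall_eq {σ : TriSlicing C} {l : List ℝ} {E : C} (h : Filt σ.P l E) {φ : ℝ}
    (hl : ∀ χ ∈ l, χ = φ) : σ.P φ E := by
  cases h with
  | nil E hE => exact σ.zero_mem φ E hE
  | cons ψ l X E A f p d hT hX hA hA0 hlt =>
    obtain rfl := hl ψ (by simp)
    cases hX with
    | nil X hX =>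
      have : IsIso p := (Triangle.isZero₁_iff_isIso₂ _ hT).1 hX
      exact σ.iso_closed _ (asIso p).symm hA
    | cons χ l =>
      exact absurd (hl χ (by simp)) (hlt χ (by simp)).ne'

/-! ### Comparison of the two slicings -/

lemma P_le_of_dist_lt_one (σ τ : TriStability C) (hZ : σ.Z = τ.Z)
    (hd : slicingDist σ.slicing τ.slicing < 1) {φ : ℝ} {E : C} (hE : σ.slicing.P φ E) :
    τ.slicing.P φ E := by
  by_cases h0 : IsZero E
  · exact τ.slicing.zero_mem φ E h0
  have hheight : ∀ F, σ.height φ F = τ.height φ F := fun F => by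
    simp only [TriStability.height, hZ]
  obtain ⟨l, hl, -, -⟩ := exists_filt (τ.slicing.HN E)
  have hIoo := hl.mem_Ioo hd hE h0
  have hle : ∀ χ ∈ l, χ ≤ φ := by
    by_contra! hex
    obtain ⟨A, i, l₁, hA, hne, hl₁, hinj⟩ := hl.exists_trunc φ hex
    have hpos : 0 < σ.height φ A := by
      rw [hheight]
      exact hA.height_pos (fun χ hχ => ⟨(hl₁ χ hχ).1, (hIoo χ (hl₁ χ hχ).2).2⟩) hne
    have hA0 : ¬ IsZero A := fun h => hpos.ne' (σ.height_isZero φ h)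
    obtain ⟨l₂, hA₂, -, -⟩ := exists_filt (σ.slicing.HN A)
    have hgt : ∀ χ ∈ l₂, φ - 1 < χ := by
      intro χ hχ
      have h₁ := (abs_lt.1 (abs_phi_sub_lt hd hA0).2).1
      have h₂ := hA.le_phiMinus hA0 (m := φ) (fun χ hχ => (hl₁ χ hχ).1.le)
      have h₃ := hA₂.phiMinus_le χ hχ
      linarith
    -- By positivity of the height, the largest `σ`-phase `ψ` of `A` must exceed `φ`.
    obtain ⟨ψ, -, hmax, D, j, hD, hD0, hj⟩ := hA₂.exists_top (hA₂.ne_nil hA0)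
    have hψ : φ < ψ := by
      by_contra! hψ
      exact hpos.not_ge
        (hA₂.height_nonpos fun χ hχ => ⟨hgt χ hχ, (hmax χ hχ).trans hψ⟩).1
    -- The nonzero `D → A` becomes zero in `E`, while the `τ`-phases of `D` exceed `φ - 1`.
    refine hj (hinj D ?_ j (σ.slicing.hom_zero hψ _ hD hE))
    intro χ hχ B hB
    obtain ⟨l₃, hD₃, -, -⟩ := exists_filt (τ.slicing.HN D)
    refine hD₃.shift_one.hom_from_eq_zero ?_
    intro χ' hχ' F hF g
    obtain ⟨χ'', h'', rfl⟩ := List.mem_map.1 hχ'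
    have := (hD₃.mem_Ioo hd hD hD0 χ'' h'').1
    exact τ.slicing.hom_zero (by linarith) g hF hB
  refine hl.mem_of_forall_eq
    ((hl.height_nonpos fun χ hχ => ⟨(hIoo χ hχ).1, hle χ hχ⟩).2 ?_)
  obtain ⟨r, -, hr⟩ := σ.height_of_mem φ hE h0
  rw [← hheight, hr, sub_self, mul_zero, Real.sin_zero, mul_zero]

theorem stability_eq_of_eq_Z_of_dist_lt_one
    (σ τ : TriStability C) (hZ : σ.Z = τ.Z)
    (hd : slicingDist σ.slicing τ.slicing < 1) :
    σ = τ := by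
  have hP : σ.slicing.P = τ.slicing.P := by
    funext φ E
    exact propext ⟨P_le_of_dist_lt_one σ τ hZ hd,
      P_le_of_dist_lt_one τ σ hZ.symm (slicingDist_comm σ.slicing τ.slicing ▸ hd)⟩
  obtain ⟨⟨P, _, _, _, _, _⟩, Z, _, _⟩ := σ
  obtain ⟨⟨Q, _, _, _, _, _⟩, W, _, _⟩ := τ
  obtain rfl : Z = W := hZ
  obtain rfl : P = Q := hP
  rfl
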